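/- Let d ≥ 5 and let W be a d×d unitary matrix satisfying Tr((W^{⊗2}) P_t (W^{⊗2})† · P_t) = 2/(d(d+1)). Then the unitary 3-fold twirl decomposes into two consecutive orthogonal 3-fold twirls: for every d³×d³ complex matrix M, ∫_{O(d)} ∫_{O(d)} ((W O'_ℂ W†)^{⊗3}) (O_ℂ^{⊗3} M (O_ℂ^{⊗3})†) ((W O'_ℂ W†)^{⊗3})† dμ_O(O) dμ_O(O') = ∫_{U(d)} U^{⊗3} M (U^{⊗3})† dμ_U(U). -/

import Mathlib

/-!
A `d³ × d³` matrix is regarded as a tensor with six slots, three row slots and three column slots,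
on which `X ↦ A^{⊗3} X (A^{⊗3})ᴴ` acts by the matrix `tp (Fin 3) A`; the twirls are the averages
`twirlO` and `twirlU` of these matrices.

The inner orthogonal twirl maps every tensor to an `O(d)`-invariant one. Since `3 ≤ d`, such a
tensor is a combination of Brauer diagrams, that is, of products of Kronecker deltas joining the
slots in pairs (`OInv.exists_expansion`). This is proved by elementary means: permutation
matrices, sign changes and a single rational reflection show that an invariant tensor is determined
by its components in which every index value occurs zero or two times (`OInv.eq_zero`), and on those
components it is matched by a combination of diagrams.

It then suffices that the conjugated orthogonal twirl and the unitary twirl agree on each diagram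
(`twirlO_mulVec_pairing`), because the unitary twirl absorbs the inner orthogonal one. A diagram on
three row and three column slots is of one of two kinds. If every pair joins a row to a column, it
is a permutation operator and both twirls fix it. Otherwise it has exactly one row-row pair, one
column-column pair and one mixed pair, and so is, up to relabelling, the tensor product of an
identity and the maximally entangled projection on two factors. The claim is thereby reduced to the
twofold twirl of that projection.

There, the conjugated orthogonal twirl gives a combination of the identity, the flip and the
projection, with coefficients determined by three traces. The hypothesis says that
`|Tr (W Wᵀ)|² = 2d/(d+1)`, which is exactly the value at which the coefficient of the projection
vanishes (`twirlO_one_mulVec`). The result is fixed by the unitary twirl, which also absorbs the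
conjugated orthogonal one, so the two twirls agree (`twirlO_mulVec_cup`).
-/

open Matrix MeasureTheory
open scoped Kronecker

/-- The rank-one projection onto the normalized maximally entangled vector
`ψ = (1/√d) Σ_j e_j ⊗ e_j`, as a `d²×d²` matrix. -/
noncomputable def Pt (d : ℕ) : Matrix (Fin d × Fin d) (Fin d × Fin d) ℂ :=
  fun p q => if p.1 = p.2 ∧ q.1 = q.2 then (1 : ℂ) / d else 0

/-- Coercion of a real matrix to a complex matrix, entrywise. -/
def oc {d : ℕ} (O : Matrix (Fin d) (Fin d) ℝ) : Matrix (Fin d) (Fin d) ℂ :=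
  O.map Complex.ofReal

/-- The threefold Kronecker power `A ⊗ A ⊗ A`, indexed by `Fin d × Fin d × Fin d`. -/
def kron3 {d : ℕ} (A : Matrix (Fin d) (Fin d) ℂ) :
    Matrix (Fin d × Fin d × Fin d) (Fin d × Fin d × Fin d) ℂ :=
  A ⊗ₖ (A ⊗ₖ A)

noncomputable instance (d : ℕ) : MeasurableSpace (Matrix.unitaryGroup (Fin d) ℂ) :=
  borel _

noncomputable instance (d : ℕ) : MeasurableSpace (Matrix.orthogonalGroup (Fin d) ℝ) :=
  borel _

/-! ### Averages of matrix-valued functions over compact groups -/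

section Averages

instance (d : ℕ) : BorelSpace (Matrix.unitaryGroup (Fin d) ℂ) := ⟨rfl⟩

instance (d : ℕ) : BorelSpace (Matrix.orthogonalGroup (Fin d) ℝ) := ⟨rfl⟩

theorem compactSpace_unitaryGroup {𝕜 n : Type*} [RCLike 𝕜] [Fintype n] [DecidableEq n] :
    CompactSpace (Matrix.unitaryGroup n 𝕜) := by
  refine isCompact_iff_compactSpace.mp
    (?_ : IsCompact ((Matrix.unitaryGroup n 𝕜 : Submonoid (Matrix n n 𝕜)) : Set (Matrix n n 𝕜)))
  have hK : IsCompact (Set.pi Set.univ fun _ : n => Set.pi Set.univ fun _ : n =>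
      Metric.closedBall (0 : 𝕜) 1) :=
    isCompact_univ_pi fun _ => isCompact_univ_pi fun _ => isCompact_closedBall 0 1
  refine IsCompact.of_isClosed_subset (s := (Set.pi Set.univ fun _ : n => Set.pi Set.univ
    fun _ : n => Metric.closedBall (0 : 𝕜) 1 : Set (Matrix n n 𝕜))) hK ?_ ?_
  · have : ((Matrix.unitaryGroup n 𝕜 : Submonoid (Matrix n n 𝕜)) : Set (Matrix n n 𝕜)) =
        {A | A * star A = 1} := by
      ext A
      exact Matrix.mem_unitaryGroup_iff
    rw [this]
    exact isClosed_eq (by fun_prop) continuous_const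
  · intro U hU i _ j _
    simpa using entry_norm_bound_of_unitary hU i j

instance (d : ℕ) : CompactSpace (Matrix.unitaryGroup (Fin d) ℂ) := compactSpace_unitaryGroup

instance (d : ℕ) : CompactSpace (Matrix.orthogonalGroup (Fin d) ℝ) :=
  compactSpace_unitaryGroup (𝕜 := ℝ)

variable {G : Type*} [MeasurableSpace G]

/-- The entrywise integral `∫ f(g) dμ(g)` of a matrix-valued function. -/
noncomputable def avg (μ : Measure G) {m n : Type*} (f : G → Matrix m n ℂ) : Matrix m n ℂ :=
  Matrix.of fun p q => ∫ g, f g p q ∂μ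

theorem avg_const (μ : Measure G) [IsProbabilityMeasure μ] {m n : Type*} (A : Matrix m n ℂ) :
    (avg μ fun _ => A) = A := by
  ext p q
  simp [avg]

theorem avg_mul_left [TopologicalSpace G] [BorelSpace G] [Group G] [IsTopologicalGroup G]
    (μ : Measure G) [μ.IsHaarMeasure] {m n : Type*} (f : G → Matrix m n ℂ) (h : G) :
    (avg μ fun g => f (h * g)) = avg μ f := by
  ext p q
  exact integral_mul_left_eq_self (fun g => f g p q) h

variable [TopologicalSpace G] [BorelSpace G] [CompactSpace G]

theorem integrable_entry (μ : Measure G) [IsFiniteMeasure μ] {m n : Type*}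
    {f : G → Matrix m n ℂ} (hf : Continuous f) (p : m) (q : n) :
    Integrable (fun g => f g p q) μ :=
  (hf.matrix_elem p q).integrable_of_hasCompactSupport (HasCompactSupport.of_compactSpace _)

theorem avg_mul (μ : Measure G) [IsFiniteMeasure μ] {l m n : Type*} [Fintype m]
    {f : G → Matrix l m ℂ} (hf : Continuous f) (B : Matrix m n ℂ) :
    avg μ f * B = avg μ fun g => f g * B := by
  ext p q
  simp only [avg, Matrix.mul_apply, Matrix.of_apply]
  rw [integral_finsetSum _ fun i _ => (integrable_entry μ hf p i).mul_const _]
  simp only [integral_mul_const]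

theorem mul_avg (μ : Measure G) [IsFiniteMeasure μ] {l m n : Type*} [Fintype m]
    {f : G → Matrix m n ℂ} (hf : Continuous f) (B : Matrix l m ℂ) :
    B * avg μ f = avg μ fun g => B * f g := by
  ext p q
  simp only [avg, Matrix.mul_apply, Matrix.of_apply]
  rw [integral_finsetSum _ fun i _ => (integrable_entry μ hf i q).const_mul _]
  simp only [integral_const_mul]

theorem avg_mulVec (μ : Measure G) [IsFiniteMeasure μ] {m n : Type*} [Fintype n]
    {f : G → Matrix m n ℂ} (hf : Continuous f) (v : n → ℂ) (p : m) :
    (avg μ f *ᵥ v) p = ∫ g, (f g *ᵥ v) p ∂μ := by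
  simp only [avg, Matrix.mulVec, dotProduct, Matrix.of_apply]
  rw [integral_finsetSum _ fun i _ => (integrable_entry μ hf p i).mul_const _]
  simp only [integral_mul_const]

theorem integral_mulVec (μ : Measure G) [IsFiniteMeasure μ] {l m n : Type*} [Fintype m]
    [Fintype n] {f : G → Matrix m n ℂ} (hf : Continuous f) (B : Matrix l m ℂ) (v : n → ℂ) (p : l) :
    ∫ g, (B *ᵥ (f g *ᵥ v)) p ∂μ = (B *ᵥ (avg μ f *ᵥ v)) p := by
  simp only [Matrix.mulVec_mulVec, mul_avg μ hf]
  exact (avg_mulVec μ (by fun_prop) v p).symm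

variable [Group G] [IsTopologicalGroup G]

/-- A compact group is unimodular: a right translate of its Haar probability measure is again a
Haar probability measure, hence equal to it. -/
theorem haar_isMulRightInvariant (μ : Measure G) [μ.IsHaarMeasure] [IsProbabilityMeasure μ] :
    μ.IsMulRightInvariant := by
  refine ⟨fun g => ?_⟩
  have : IsProbabilityMeasure (Measure.map (· * g) μ) :=
    Measure.isProbabilityMeasure_map (measurable_mul_const g).aemeasurable
  exact Measure.isHaarMeasure_eq_of_isProbabilityMeasure _ _

theorem avg_mul_right (μ : Measure G) [μ.IsHaarMeasure] [IsProbabilityMeasure μ] {m n : Type*}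
    (f : G → Matrix m n ℂ) (h : G) : (avg μ fun g => f (g * h)) = avg μ f := by
  have := haar_isMulRightInvariant μ
  ext p q
  exact integral_mul_right_eq_self (fun g => f g p q) h

end Averages

/-! ### Tensor powers and pairings -/

section Tensors

set_option linter.unusedSectionVars false

variable {D κ : Type*} [Fintype D] [DecidableEq D] [Fintype κ] [DecidableEq κ]

/-- The matrix `A` (for `false`, a row slot) or its entrywise conjugate (for `true`, a column
slot). -/
def slot (A : Matrix D D ℂ) (b : Bool) : Matrix D D ℂ :=
  if b then A.map (starRingEnd ℂ) else A

/-- The matrix of the superoperator `X ↦ A^{⊗κ} X (A^{⊗κ})ᴴ`. A matrix `X` on `(ℂ^D)^{⊗κ}` is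
regarded as a vector with index set `κ × Bool → D`: the slots `(x, false)` hold the row index and
the slots `(x, true)` the column index. -/
def tp (κ : Type*) [Fintype κ] (A : Matrix D D ℂ) :
    Matrix (κ × Bool → D) (κ × Bool → D) ℂ :=
  Matrix.of fun p j => ∏ k, slot A k.2 (p k) (j k)

/-- The tensor of the Brauer diagram joining slot `s (x, false)` to slot `s (x, true)` for each
`x : κ`. Different permutations `s` may describe the same diagram. -/
def pairing (s : Equiv.Perm (κ × Bool)) : (κ × Bool → D) → ℂ :=
  fun j => ∏ x, if j (s (x, false)) = j (s (x, true)) then 1 else 0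

theorem slot_mul (A B : Matrix D D ℂ) (b : Bool) : slot (A * B) b = slot A b * slot B b := by
  cases b
  · rfl
  · simp [slot, Matrix.map_mul]

theorem slot_one (b : Bool) : slot (1 : Matrix D D ℂ) b = 1 := by
  cases b
  · rfl
  · simp [slot]

theorem continuous_slot (b : Bool) : Continuous fun A : Matrix D D ℂ => slot A b := by
  cases b
  · exact continuous_id
  · exact continuous_id.matrix_map RCLike.continuous_conj

theorem continuous_tp : Continuous fun A : Matrix D D ℂ => tp κ A := by
  refine continuous_matrix fun p j => ?_
  refine continuous_finsetProd _ fun k _ => (continuous_slot k.2).matrix_elem _ _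

theorem tp_mul (A B : Matrix D D ℂ) : tp κ (A * B) = tp κ A * tp κ B := by
  ext p j
  simp only [tp, Matrix.of_apply, Matrix.mul_apply, slot_mul]
  rw [Finset.prod_univ_sum, Fintype.piFinset_univ]
  simp only [Finset.prod_mul_distrib]

theorem tp_one : tp κ (1 : Matrix D D ℂ) = 1 := by
  ext p j
  simp only [tp, Matrix.of_apply, slot_one, Matrix.one_apply, Finset.prod_ite_zero,
    Finset.prod_const_one]
  simp [funext_iff]

/-- Summing a product of functions of the individual slots against a pairing factors into a
product over the pairs. -/
theorem sum_prod_mul_pairing (s : Equiv.Perm (κ × Bool)) (B : κ × Bool → D → ℂ) :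
    ∑ j : κ × Bool → D, (∏ k, B k (j k)) * pairing s j =
      ∏ x, ∑ y, B (s (x, false)) y * B (s (x, true)) y := by
  have h1 : ∀ x, ∑ y, B (s (x, false)) y * B (s (x, true)) y =
      ∑ z : Bool → D, (B (s (x, false)) (z false) * B (s (x, true)) (z true)) *
        (if z false = z true then 1 else 0) := by
    intro x
    rw [← (Equiv.boolArrowEquivProd D).symm.sum_comp, Fintype.sum_prod_type]
    simp [Equiv.boolArrowEquivProd]
  simp only [h1]
  rw [Finset.prod_univ_sum, Fintype.piFinset_univ]
  rw [← (s.arrowCongr (Equiv.refl D)).sum_comp, ← (Equiv.curry κ Bool D).symm.sum_comp]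
  refine Finset.sum_congr rfl fun z _ => ?_
  rw [← Equiv.prod_comp s, Fintype.prod_prod_type, pairing, ← Finset.prod_mul_distrib]
  simp [Equiv.arrowCongr, mul_comm]

theorem tp_mulVec_pairing (A : Matrix D D ℂ) (s : Equiv.Perm (κ × Bool)) (p : κ × Bool → D) :
    (tp κ A *ᵥ pairing s) p = ∏ x,
      (slot A (s (x, false)).2 * (slot A (s (x, true)).2)ᵀ) (p (s (x, false))) (p (s (x, true))) :=
  sum_prod_mul_pairing s fun k => slot A k.2 (p k)

theorem pairing_vecMul_tp (A : Matrix D D ℂ) (s : Equiv.Perm (κ × Bool)) (p : κ × Bool → D) :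
    (pairing s ᵥ* tp κ A) p = ∏ x,
      ((slot A (s (x, false)).2)ᵀ * slot A (s (x, true)).2) (p (s (x, false))) (p (s (x, true))) := by
  refine Eq.trans ?_ (sum_prod_mul_pairing s fun k y => slot A k.2 y (p k))
  simp only [Matrix.vecMul, dotProduct, tp, Matrix.of_apply, mul_comm]

theorem slot_mul_transpose_of_ne {A : Matrix D D ℂ} (hA : A ∈ Matrix.unitaryGroup D ℂ) {b c : Bool}
    (h : b ≠ c) : slot A b * (slot A c)ᵀ = 1 := by
  have h1 : A * Aᴴ = 1 := Matrix.mem_unitaryGroup_iff.mp hA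
  have h2 : (A.map (starRingEnd ℂ))ᵀ = Aᴴ := rfl
  cases b <;> cases c <;> simp_all only [slot, ne_eq, not_true_eq_false, Bool.false_eq_true,
    if_true, if_false]
  · rw [← Matrix.transpose_transpose (A.map (starRingEnd ℂ)), ← Matrix.transpose_mul, h2, h1,
      Matrix.transpose_one]

theorem slot_transpose_mul_of_ne {A : Matrix D D ℂ} (hA : A ∈ Matrix.unitaryGroup D ℂ) {b c : Bool}
    (h : b ≠ c) : (slot A b)ᵀ * slot A c = 1 := by
  have h1 : Aᴴ * A = 1 := Matrix.mem_unitaryGroup_iff'.mp hA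
  have h2 : (A.map (starRingEnd ℂ))ᵀ = Aᴴ := rfl
  cases b <;> cases c <;> simp_all only [slot, ne_eq, not_true_eq_false, Bool.false_eq_true,
    if_true, if_false]
  · rw [← Matrix.transpose_transpose (A.map (starRingEnd ℂ)), ← Matrix.transpose_mul, h2, h1,
      Matrix.transpose_one]

theorem prod_one_apply (s : Equiv.Perm (κ × Bool)) (p : κ × Bool → D) :
    ∏ x, (1 : Matrix D D ℂ) (p (s (x, false))) (p (s (x, true))) = pairing s p := by
  simp only [pairing, Matrix.one_apply]

/-- A pairing that joins row slots to column slots only is the tensor of a permutation operator,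
which commutes with all `A^{⊗κ}`. -/
theorem tp_mulVec_pairing_of_ne {A : Matrix D D ℂ} (hA : A ∈ Matrix.unitaryGroup D ℂ)
    {s : Equiv.Perm (κ × Bool)} (h : ∀ x, (s (x, false)).2 ≠ (s (x, true)).2) :
    tp κ A *ᵥ pairing s = pairing s := by
  ext p
  rw [tp_mulVec_pairing, ← prod_one_apply]
  simp only [slot_mul_transpose_of_ne hA (h _)]

theorem pairing_vecMul_tp_of_ne {A : Matrix D D ℂ} (hA : A ∈ Matrix.unitaryGroup D ℂ)
    {s : Equiv.Perm (κ × Bool)} (h : ∀ x, (s (x, false)).2 ≠ (s (x, true)).2) :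
    pairing s ᵥ* tp κ A = pairing s := by
  ext p
  rw [pairing_vecMul_tp, ← prod_one_apply]
  simp only [slot_transpose_mul_of_ne hA (h _)]

theorem slot_oc {d : ℕ} (O : Matrix (Fin d) (Fin d) ℝ) (b : Bool) : slot (oc O) b = oc O := by
  cases b
  · rfl
  · ext i j
    simp [slot, oc]

theorem oc_mul {d : ℕ} (O P : Matrix (Fin d) (Fin d) ℝ) : oc (O * P) = oc O * oc P :=
  Matrix.map_mul (f := Complex.ofRealHom)

theorem oc_one {d : ℕ} : oc (1 : Matrix (Fin d) (Fin d) ℝ) = 1 :=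
  Matrix.map_one _ Complex.ofReal_zero Complex.ofReal_one

theorem oc_mul_transpose {d : ℕ} {O : Matrix (Fin d) (Fin d) ℝ}
    (hO : O ∈ Matrix.orthogonalGroup (Fin d) ℝ) : oc O * (oc O)ᵀ = 1 := by
  have h : O * Oᵀ = 1 := (Matrix.mem_orthogonalGroup_iff _ _).mp hO
  rw [← oc_one, ← h, oc_mul]
  rfl

theorem oc_transpose_mul {d : ℕ} {O : Matrix (Fin d) (Fin d) ℝ}
    (hO : O ∈ Matrix.orthogonalGroup (Fin d) ℝ) : (oc O)ᵀ * oc O = 1 := by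
  have h : Oᵀ * O = 1 := (Matrix.mem_orthogonalGroup_iff' _ _).mp hO
  rw [← oc_one, ← h, oc_mul]
  rfl

theorem oc_mem_unitaryGroup {d : ℕ} {O : Matrix (Fin d) (Fin d) ℝ}
    (hO : O ∈ Matrix.orthogonalGroup (Fin d) ℝ) : oc O ∈ Matrix.unitaryGroup (Fin d) ℂ := by
  rw [Matrix.mem_unitaryGroup_iff, ← oc_mul_transpose hO]
  congr 1
  ext i j
  simp [oc, Matrix.star_apply]

theorem continuous_oc {d : ℕ} : Continuous (oc : Matrix (Fin d) (Fin d) ℝ → _) :=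
  continuous_id.matrix_map Complex.continuous_ofReal

theorem tp_oc_mulVec_pairing {d : ℕ} {O : Matrix (Fin d) (Fin d) ℝ}
    (hO : O ∈ Matrix.orthogonalGroup (Fin d) ℝ) (s : Equiv.Perm (κ × Bool)) :
    tp κ (oc O) *ᵥ pairing s = pairing s := by
  ext p
  rw [tp_mulVec_pairing, ← prod_one_apply]
  simp only [slot_oc, oc_mul_transpose hO]

theorem pairing_vecMul_tp_oc {d : ℕ} {O : Matrix (Fin d) (Fin d) ℝ}
    (hO : O ∈ Matrix.orthogonalGroup (Fin d) ℝ) (s : Equiv.Perm (κ × Bool)) :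
    pairing s ᵥ* tp κ (oc O) = pairing s := by
  ext p
  rw [pairing_vecMul_tp, ← prod_one_apply]
  simp only [slot_oc, oc_transpose_mul hO]

theorem tp_oc_apply {d : ℕ} (O : Matrix (Fin d) (Fin d) ℝ) (i j : κ × Bool → Fin d) :
    tp κ (oc O) i j = ∏ k, (O (i k) (j k) : ℂ) := by
  simp only [tp, Matrix.of_apply, slot_oc]
  rfl

end Tensors

/-! ### Orthogonal invariants of tensor powers in the stable range -/

section Invariants

set_option linter.unusedSectionVars false

variable {d : ℕ} {ι : Type*} [Fintype ι] [DecidableEq ι]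

/-- Invariance of a tensor with slots `ι` under the diagonal action of the orthogonal group. -/
def OInv (T : (ι → Fin d) → ℂ) : Prop :=
  ∀ O ∈ Matrix.orthogonalGroup (Fin d) ℝ, ∀ i, ∑ j, (∏ k, (O (i k) (j k) : ℂ)) * T j = T i

theorem ncard_fiber (i : ι → Fin d) (a : Fin d) :
    {k | i k = a}.ncard = (Finset.univ.filter fun k => i k = a).card := by
  rw [Set.ncard_eq_toFinset_card', Set.toFinset_ofPred]

theorem prod_fiber (i : ι → Fin d) (a : Fin d) (t : ℂ) :
    (∏ k, if i k = a then t else 1) = t ^ {k | i k = a}.ncard := by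
  rw [ncard_fiber]
  simp [Finset.prod_ite]

/-- Invariance under permutation matrices. -/
theorem OInv.perm {T : (ι → Fin d) → ℂ} (hT : OInv T) (g : Equiv.Perm (Fin d)) (i : ι → Fin d) :
    T (fun k => g (i k)) = T i := by
  have hO : (Matrix.of fun x y => if g.symm x = y then 1 else 0 : Matrix (Fin d) (Fin d) ℝ) ∈
      Matrix.orthogonalGroup (Fin d) ℝ := by
    rw [Matrix.mem_orthogonalGroup_iff]
    ext x y
    simp [Matrix.mul_apply, Matrix.one_apply, eq_comm]
  rw [← hT _ hO]
  have : ∀ j : ι → Fin d, (∏ k, (((Matrix.of fun x y => if g.symm x = y then 1 else 0 :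
      Matrix (Fin d) (Fin d) ℝ) (g (i k)) (j k) : ℝ) : ℂ)) = if i = j then 1 else 0 := by
    intro j
    simp only [Matrix.of_apply, Equiv.symm_apply_apply, apply_ite Complex.ofReal,
      Complex.ofReal_one, Complex.ofReal_zero, Finset.prod_ite_zero, Finset.prod_const_one]
    simp [funext_iff]
  simp only [this, ite_mul, one_mul, zero_mul, Finset.sum_ite_eq, Finset.mem_univ, if_true]

/-- Invariance under diagonal sign matrices kills every component in which some index value occurs
an odd number of times. -/
theorem OInv.eq_zero_of_odd {T : (ι → Fin d) → ℂ} (hT : OInv T) (i : ι → Fin d) (a : Fin d)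
    (h : Odd {k | i k = a}.ncard) : T i = 0 := by
  have hO : (Matrix.diagonal fun x => if x = a then -1 else 1 : Matrix (Fin d) (Fin d) ℝ) ∈
      Matrix.orthogonalGroup (Fin d) ℝ := by
    rw [Matrix.mem_orthogonalGroup_iff, Matrix.diagonal_transpose, Matrix.diagonal_mul_diagonal,
      ← Matrix.diagonal_one]
    congr 1
    ext x
    split_ifs <;> simp
  have key := hT _ hO i
  have hprod : ∀ j : ι → Fin d, (∏ k, (((Matrix.diagonal fun x => if x = a then -1 else 1 :
      Matrix (Fin d) (Fin d) ℝ) (i k) (j k) : ℝ) : ℂ)) = if i = j then -1 else 0 := by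
    intro j
    split_ifs with hij
    · subst hij
      simp only [Matrix.diagonal_apply_eq, apply_ite Complex.ofReal, Complex.ofReal_neg,
        Complex.ofReal_one, prod_fiber]
      exact h.neg_one_pow
    · obtain ⟨k, hk⟩ := Function.ne_iff.mp hij
      exact Finset.prod_eq_zero (Finset.mem_univ k) (by simp [Matrix.diagonal_apply_ne _ hk])
  simp only [hprod, ite_mul, zero_mul, Finset.sum_ite_eq, Finset.mem_univ, if_true] at key
  linear_combination (-1 / 2 : ℂ) * key

/-- The reflection with block `!![3/5, 4/5; 4/5, -3/5]` on the coordinates `a, c`. -/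
noncomputable def refl345 (a c : Fin d) : Matrix (Fin d) (Fin d) ℝ :=
  1 - (2 / 5 : ℝ) • Matrix.vecMulVec (Pi.single a 1 - Pi.single c 2) (Pi.single a 1 - Pi.single c 2)

theorem refl345_mem {a c : Fin d} (hac : a ≠ c) :
    refl345 a c ∈ Matrix.orthogonalGroup (Fin d) ℝ := by
  have hv : (Pi.single a 1 - Pi.single c 2 : Fin d → ℝ) ⬝ᵥ (Pi.single a 1 - Pi.single c 2) = 5 := by
    simp [hac, hac.symm]
    norm_num
  rw [Matrix.mem_orthogonalGroup_iff, refl345]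
  set v : Fin d → ℝ := Pi.single a 1 - Pi.single c 2
  have hsq : Matrix.vecMulVec v v * Matrix.vecMulVec v v = (5 : ℝ) • Matrix.vecMulVec v v := by
    rw [Matrix.vecMulVec_mul_vecMulVec, hv]
    ext x y
    simp [Matrix.vecMulVec_apply]
    ring
  rw [Matrix.transpose_sub, Matrix.transpose_smul, Matrix.transpose_vecMulVec, Matrix.transpose_one,
    mul_sub, sub_mul, sub_mul, Matrix.mul_smul, Matrix.smul_mul, Matrix.smul_mul, Matrix.mul_smul, hsq]
  simp only [mul_one, one_mul, smul_smul]
  ext x y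
  simp only [Matrix.sub_apply, Matrix.smul_apply, smul_eq_mul]
  ring

theorem refl345_apply {a c : Fin d} (hac : a ≠ c) (x y : Fin d) (hx : x ≠ c) :
    refl345 a c x y = if x = a then (if y = a then 3 / 5 else if y = c then 4 / 5 else 0)
      else if x = y then 1 else 0 := by
  simp only [refl345, Matrix.sub_apply, Matrix.smul_apply, Matrix.vecMulVec_apply, Pi.sub_apply,
    Pi.single_apply, Matrix.one_apply, smul_eq_mul, hx]
  by_cases hxa : x = a
  · subst hxa
    by_cases hy : y = x
    · subst hy
      simp [hac]
      norm_num
    · by_cases hyc : y = c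
      · simp [hyc, hac, hac.symm]
        norm_num
      · simp [hy, hyc, Ne.symm hy]
  · simp [hxa]

/-- If `a` occurs at least three times in `i`, then `T i` vanishes as soon as all components with
more distinct indices vanish: expanding along `refl345 a c` with `c` not in `i`, the only surviving
components are `i` itself and `i` with `a` replaced by `c`, which are equal, so that
`(1 - (3/5)^N - (4/5)^N) * T i = 0`. -/
theorem OInv.eq_zero_of_three_le {T : (ι → Fin d) → ℂ} (hT : OInv T) (i : ι → Fin d)
    (a c : Fin d) (hc : ∀ k, i k ≠ c) (h : 3 ≤ {k | i k = a}.ncard)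
    (hmore : ∀ j : ι → Fin d, (Set.range i).ncard < (Set.range j).ncard → T j = 0) : T i = 0 := by
  have hne : ∃ k₀, i k₀ = a := by
    by_contra! hcon
    simp [hcon] at h
  obtain ⟨k₀, hk₀⟩ := hne
  have hac : a ≠ c := hk₀ ▸ hc k₀
  set i' : ι → Fin d := fun k => if i k = a then c else i k with hi'
  have hi'T : T i' = T i := by
    rw [← hT.perm (Equiv.swap a c) i]
    congr 1
    ext k
    simp only [hi']
    split_ifs with hk
    · simp [hk]
    · rw [Equiv.swap_apply_of_ne_of_ne hk (hc k)]
  have hii' : i ≠ i' := fun hcon => hac (by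
    have := congrFun hcon k₀
    simpa [hi', hk₀] using this)
  have key := hT _ (refl345_mem hac) i
  rw [Finset.sum_eq_add i i' hii'] at key
  rotate_left
  · rintro j - ⟨hji, hji'⟩
    by_cases hz : ∀ k, refl345 a c (i k) (j k) ≠ 0
    · have hj1 : ∀ k, i k ≠ a → j k = i k := by
        intro k hk
        have := hz k
        rw [refl345_apply hac _ _ (hc k)] at this
        simp [hk] at this
        exact this.symm
      have hj2 : ∀ k, i k = a → j k = a ∨ j k = c := by
        intro k hk
        have := hz k
        rw [refl345_apply hac _ _ (hc k)] at this
        by_contra! hcon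
        simp [hk, hcon] at this
      obtain ⟨k₁, hk₁⟩ := Function.ne_iff.mp hji
      have hk₁c : j k₁ = c := by
        by_cases hh : i k₁ = a
        · exact (hj2 k₁ hh).resolve_left fun h' => hk₁ (h'.trans hh.symm)
        · exact absurd (hj1 k₁ hh) hk₁
      obtain ⟨k₂, hk₂⟩ := Function.ne_iff.mp hji'
      have hk₂a : j k₂ = a := by
        by_cases hh : i k₂ = a
        · exact (hj2 k₂ hh).resolve_right fun h' => hk₂ (by simp [hi', hh, h'])
        · exact absurd (by simp [hi', hh, hj1 k₂ hh]) hk₂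
      rw [hmore j, mul_zero]
      refine Set.ncard_lt_ncard ⟨?_, fun hsub => ?_⟩ (Set.toFinite _)
      · rintro _ ⟨k, rfl⟩
        by_cases hh : i k = a
        · exact ⟨k₂, hk₂a.trans hh.symm⟩
        · exact ⟨k, hj1 k hh⟩
      · obtain ⟨k, hk⟩ := hsub ⟨k₁, hk₁c⟩
        exact hc k hk
    · push Not at hz
      obtain ⟨k, hk⟩ := hz
      rw [Finset.prod_eq_zero (Finset.mem_univ k) (by simp [hk]), zero_mul]
  · simp
  · simp
  have e1 : ∏ k, ((refl345 a c (i k) (i k) : ℝ) : ℂ) = (3 / 5) ^ {k | i k = a}.ncard := by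
    rw [← prod_fiber]
    refine Finset.prod_congr rfl fun k _ => ?_
    rw [refl345_apply hac _ _ (hc k)]
    by_cases hk : i k = a <;> simp [hk]
  have e2 : ∏ k, ((refl345 a c (i k) (i' k) : ℝ) : ℂ) = (4 / 5) ^ {k | i k = a}.ncard := by
    rw [← prod_fiber]
    refine Finset.prod_congr rfl fun k _ => ?_
    rw [refl345_apply hac _ _ (hc k)]
    by_cases hk : i k = a <;> simp [hi', hk, hac.symm]
  rw [e1, e2, hi'T] at key
  obtain ⟨m, hm⟩ := Nat.exists_eq_add_of_le h
  rw [hm] at key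
  have hlt : ((3 / 5) ^ (3 + m) + (4 / 5) ^ (3 + m) : ℝ) < 1 := by
    have h3 : ((3 / 5) ^ m : ℝ) ≤ 1 := pow_le_one₀ (by norm_num) (by norm_num)
    have h4 : ((4 / 5) ^ m : ℝ) ≤ 1 := pow_le_one₀ (by norm_num) (by norm_num)
    rw [pow_add, pow_add]
    nlinarith
  have hne0 : ((3 / 5) ^ (3 + m) + (4 / 5) ^ (3 + m) - 1 : ℂ) ≠ 0 := by
    have h : (((3 / 5) ^ (3 + m) + (4 / 5) ^ (3 + m) - 1 : ℝ) : ℂ) ≠ 0 :=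
      Complex.ofReal_ne_zero.mpr (by linarith)
    push_cast at h
    exact h
  refine (mul_eq_zero.mp (?_ : _ * T i = 0)).resolve_left hne0
  linear_combination key

/-- An invariant tensor with at most `2d` slots is determined by its components in which every
index value occurs zero or two times. -/
theorem OInv.eq_zero {T : (ι → Fin d) → ℂ} (hT : OInv T) (hcard : Fintype.card ι ≤ 2 * d)
    (h2 : ∀ i : ι → Fin d, (∀ a, {k | i k = a}.ncard = 0 ∨ {k | i k = a}.ncard = 2) → T i = 0)
    (i : ι → Fin d) : T i = 0 := by
  induction hn : d - (Set.range i).ncard using Nat.strong_induction_on generalizing i with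
  | _ n ih =>
  by_cases hodd : ∃ a, Odd {k | i k = a}.ncard
  · obtain ⟨a, ha⟩ := hodd
    exact hT.eq_zero_of_odd i a ha
  by_cases h3 : ∃ a, 3 ≤ {k | i k = a}.ncard
  · obtain ⟨a, ha⟩ := h3
    push Not at hodd
    have himg : (Finset.univ.image i).card < d := by
      have hsum := Finset.card_eq_sum_card_image i Finset.univ
      have hlt : ∑ _b ∈ Finset.univ.image i, 2 <
          ∑ b ∈ Finset.univ.image i, (Finset.univ.filter fun k => i k = b).card := by
        refine Finset.sum_lt_sum ?_ ⟨a, ?_, ?_⟩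
        · intro b hb
          obtain ⟨k, -, hk⟩ := Finset.mem_image.mp hb
          have hpos : 0 < (Finset.univ.filter fun k => i k = b).card :=
            Finset.card_pos.mpr ⟨k, by simp [hk]⟩
          have := Nat.not_odd_iff_even.mp (hodd b)
          rw [ncard_fiber] at this
          obtain ⟨r, hr⟩ := this
          omega
        · rw [ncard_fiber] at ha
          obtain ⟨k, hk⟩ := Finset.card_pos.mp (by omega : 0 < (Finset.univ.filter fun k => i k = a).card)
          exact Finset.mem_image.mpr ⟨k, by simp, by simpa using hk⟩
        · rw [← ncard_fiber]
          omega
      rw [← hsum, Finset.sum_const, Finset.card_univ, smul_eq_mul] at hlt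
      omega
    obtain ⟨c, hc⟩ : ∃ c, c ∉ Finset.univ.image i := by
      by_contra! hcon
      rw [Finset.eq_univ_iff_forall.mpr hcon] at himg
      simp at himg
    refine hT.eq_zero_of_three_le i a c (fun k hk => hc (by simp [← hk])) ha fun j hj => ?_
    refine ih _ ?_ j rfl
    have : (Set.range j).ncard ≤ d := by
      simpa using Set.ncard_le_card (Set.range j)
    omega
  · refine h2 i fun a => ?_
    push Not at hodd h3
    have h1 := h3 a
    have h2 := hodd a
    rw [Nat.not_odd_iff_even] at h2
    obtain ⟨r, hr⟩ := h2
    omega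

variable {κ : Type*} [Fintype κ] [DecidableEq κ]

theorem pairing_eq_ite {D : Type*} [DecidableEq D] (s : Equiv.Perm (κ × Bool)) (j : κ × Bool → D) :
    pairing s j = if ∀ x, j (s (x, false)) = j (s (x, true)) then 1 else 0 := by
  simp [pairing, Finset.prod_ite_zero]

/-- An index tuple in which every value occurs zero or two times assigns distinct values to the
pairs of some pairing. -/
theorem exists_perm_of_ncard_fiber {i : κ × Bool → Fin d}
    (h2 : ∀ a, {k | i k = a}.ncard = 0 ∨ {k | i k = a}.ncard = 2) :
    ∃ (t : Equiv.Perm (κ × Bool)) (e : κ → Fin d), Function.Injective e ∧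
      ∀ k, i k = e (t.symm k).1 := by
  have himg : ∀ b ∈ Finset.univ.image i, (Finset.univ.filter fun k => i k = b).card = 2 := by
    intro b hb
    obtain ⟨k, -, hk⟩ := Finset.mem_image.mp hb
    have hpos : 0 < (Finset.univ.filter fun k => i k = b).card :=
      Finset.card_pos.mpr ⟨k, by simp [hk]⟩
    have := h2 b
    rw [ncard_fiber] at this
    omega
  have hcard : Fintype.card κ = Fintype.card (Finset.univ.image i) := by
    have hsum := Finset.card_eq_sum_card_image i Finset.univ
    rw [Finset.sum_congr rfl himg, Finset.card_univ, Finset.sum_const, smul_eq_mul,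
      Fintype.card_prod, Fintype.card_bool] at hsum
    rw [Fintype.card_coe]
    omega
  let ε : κ ≃ Finset.univ.image i := Fintype.equivOfCardEq hcard
  have hφ : ∀ x, Nonempty (Bool ≃ {k // i k = (ε x : Fin d)}) := by
    intro x
    refine ⟨Fintype.equivOfCardEq ?_⟩
    rw [Fintype.card_subtype, himg _ (ε x).2, Fintype.card_bool]
  let φ := fun x => (hφ x).some
  let t : κ × Bool → κ × Bool := fun k => (φ k.1 k.2).1
  have hit : ∀ k, i (t k) = ε k.1 := fun k => (φ k.1 k.2).2
  have ht : Function.Injective t := by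
    rintro ⟨x, b⟩ ⟨y, b'⟩ h
    have hxy : x = y := by
      have h' := congrArg i h
      rw [hit, hit] at h'
      exact ε.injective (Subtype.ext h')
    subst hxy
    have hb : b = b' := (φ x).injective (Subtype.ext h)
    rw [hb]
  refine ⟨Equiv.ofBijective t (Finite.injective_iff_bijective.mp ht), fun x => ε x,
    fun x y h => ε.injective (Subtype.ext h), fun k => ?_⟩
  refine Eq.trans ?_ (hit _)
  exact congrArg i (Equiv.apply_symm_apply (Equiv.ofBijective t _) k).symm

/-- Tensors `T` with `2 |κ|` slots which are invariant under `O(d)` with `|κ| ≤ d` are combinations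
of pairings (the first fundamental theorem for `O(d)` in the stable range). By `OInv.eq_zero` it is
enough to match the components at the tuples `idx t` giving distinct values to the pairs of a
pairing `t`. A pairing `s` is nonzero at `idx t` only if `s` and `t` describe the same diagram, and
`N` permutations describe each diagram, so `c s = T (idx s) / N` works. -/
theorem OInv.exists_expansion {T : (κ × Bool → Fin d) → ℂ} (hT : OInv T)
    (hcard : Fintype.card κ ≤ d) :
    ∃ c : Equiv.Perm (κ × Bool) → ℂ, T = ∑ s, c s • pairing s := by
  obtain ⟨ι₀⟩ : Nonempty (κ ↪ Fin d) :=
    Function.Embedding.nonempty_of_card_le (by simpa using hcard)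
  -- The index tuple giving the pair number `x` of the pairing `t` the value `ι₀ x`.
  let idx : Equiv.Perm (κ × Bool) → κ × Bool → Fin d := fun t k => ι₀ (t.symm k).1
  have hconst : ∀ {T : (κ × Bool → Fin d) → ℂ}, OInv T → ∀ (t : Equiv.Perm (κ × Bool))
      (e : κ → Fin d), Function.Injective e → T (fun k => e (t.symm k).1) = T (idx t) := by
    intro T hT t e he
    let f : {y // y ∈ Set.range ι₀} ≃ {y // y ∈ Set.range e} :=
      (Equiv.ofInjective _ ι₀.injective).symm.trans (Equiv.ofInjective e he)
    classical
    rw [← hT.perm f.extendSubtype (idx t)]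
    congr 1
    ext k
    rw [f.extendSubtype_apply_of_mem _ ⟨_, rfl⟩]
    simp [f]
  have hsame : ∀ s t, pairing s (idx t) ≠ (0 : ℂ) → T (idx s) = T (idx t) := by
    intro s t hst
    rw [pairing_eq_ite] at hst
    have hst : ∀ x, idx t (s (x, false)) = idx t (s (x, true)) := by
      by_contra hcon
      simp [hcon] at hst
    let e : κ → κ := fun x => (t.symm (s (x, false))).1
    have he' : ∀ k, (t.symm k).1 = e (s.symm k).1 := by
      intro k
      obtain ⟨⟨x, b⟩, rfl⟩ := s.surjective k
      rw [Equiv.symm_apply_apply]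
      cases b
      · rfl
      · exact ι₀.injective (hst x).symm
    have he : Function.Injective e := by
      rw [Finite.injective_iff_surjective]
      intro y
      exact ⟨(s.symm (t (y, false))).1, by rw [← he', Equiv.symm_apply_apply]⟩
    rw [← hconst hT s (fun x => ι₀ (e x)) (ι₀.injective.comp he)]
    congr 1
    ext k
    simp [idx, he']
  let N : ℂ := ∑ s : Equiv.Perm (κ × Bool), pairing s (idx (Equiv.refl _))
  have hN : ∀ t, ∑ s : Equiv.Perm (κ × Bool), pairing s (idx t) = N := by
    intro t
    rw [← Equiv.sum_comp (Equiv.mulLeft t)]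
    refine Finset.sum_congr rfl fun s _ => ?_
    simp [pairing_eq_ite, idx]
  have hN0 : N ≠ 0 := by
    simp only [N, pairing_eq_ite]
    rw [Finset.sum_boole, Nat.cast_ne_zero, ← Nat.pos_iff_ne_zero, Finset.card_pos]
    exact ⟨Equiv.refl _, by simp [idx]⟩
  refine ⟨fun s => T (idx s) / N, ?_⟩
  rw [← sub_eq_zero]
  set S : (κ × Bool → Fin d) → ℂ := ∑ s, (T (idx s) / N) • pairing s with hS
  have hT' : OInv (T - S) := by
    intro O hO i
    have hp : tp κ (oc O) *ᵥ S = S := by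
      rw [hS, Matrix.mulVec_sum]
      simp only [Matrix.mulVec_smul, tp_oc_mulVec_pairing hO]
    have hp' := congrFun hp i
    simp only [Matrix.mulVec, dotProduct, tp_oc_apply] at hp'
    simp only [Pi.sub_apply, mul_sub, Finset.sum_sub_distrib, hT O hO i, hp']
  have hidx : ∀ t, (T - S) (idx t) = 0 := by
    intro t
    have : ∀ s, T (idx s) / N * pairing s (idx t) = T (idx t) / N * pairing s (idx t) := by
      intro s
      by_cases h : pairing s (idx t) = (0 : ℂ)
      · simp [h]
      · rw [hsame s t h]
    simp only [hS, Pi.sub_apply, Finset.sum_apply, Pi.smul_apply, smul_eq_mul, this]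
    rw [← Finset.mul_sum, hN, div_mul_cancel₀ _ hN0, sub_self]
  ext i
  refine hT'.eq_zero (by simp only [Fintype.card_prod, Fintype.card_bool]; omega) (fun i h2 => ?_) i
  obtain ⟨t, e, he, hi⟩ := exists_perm_of_ncard_fiber h2
  rw [funext hi, hconst hT' t e he, hidx]

end Invariants

/-! ### The twirls as averages of tensor powers -/

section Twirls

set_option linter.unusedSectionVars false

variable {d : ℕ} (κ : Type*) [Fintype κ] [DecidableEq κ]

/-- The orthogonal twirl superoperator, for the orthogonal group conjugated by `W`. -/
noncomputable def twirlO (μ : Measure (Matrix.orthogonalGroup (Fin d) ℝ))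
    (W : Matrix (Fin d) (Fin d) ℂ) : Matrix (κ × Bool → Fin d) (κ × Bool → Fin d) ℂ :=
  avg μ fun O => tp κ (W * oc (O : Matrix (Fin d) (Fin d) ℝ) * Wᴴ)

/-- The unitary twirl superoperator. -/
noncomputable def twirlU (μ : Measure (Matrix.unitaryGroup (Fin d) ℂ)) :
    Matrix (κ × Bool → Fin d) (κ × Bool → Fin d) ℂ :=
  avg μ fun U => tp κ (U : Matrix (Fin d) (Fin d) ℂ)

theorem continuous_tpO (W : Matrix (Fin d) (Fin d) ℂ) :
    Continuous fun O : Matrix.orthogonalGroup (Fin d) ℝ =>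
      tp κ (W * oc (O : Matrix (Fin d) (Fin d) ℝ) * Wᴴ) := by
  have h := (continuous_oc (d := d)).comp
    (continuous_subtype_val (p := (· ∈ Matrix.orthogonalGroup (Fin d) ℝ)))
  exact continuous_tp.comp ((continuous_const.matrix_mul h).matrix_mul continuous_const)

theorem continuous_tpU :
    Continuous fun U : Matrix.unitaryGroup (Fin d) ℂ => tp κ (U : Matrix (Fin d) (Fin d) ℂ) :=
  continuous_tp.comp continuous_subtype_val

theorem conj_oc_mem {W : Matrix (Fin d) (Fin d) ℂ} (hW : W ∈ Matrix.unitaryGroup (Fin d) ℂ)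
    (O : Matrix.orthogonalGroup (Fin d) ℝ) :
    W * oc (O : Matrix (Fin d) (Fin d) ℝ) * Wᴴ ∈ Matrix.unitaryGroup (Fin d) ℂ :=
  mul_mem (mul_mem hW (oc_mem_unitaryGroup O.2)) (Unitary.star_mem hW)

variable (μO : Measure (Matrix.orthogonalGroup (Fin d) ℝ))
  [μO.IsHaarMeasure] [IsProbabilityMeasure μO]
  (μU : Measure (Matrix.unitaryGroup (Fin d) ℂ)) [μU.IsHaarMeasure] [IsProbabilityMeasure μU]

theorem tp_mul_twirlO {O : Matrix (Fin d) (Fin d) ℝ}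
    (hO : O ∈ Matrix.orthogonalGroup (Fin d) ℝ) :
    tp κ (oc O) * twirlO κ μO 1 = twirlO κ μO 1 := by
  rw [twirlO, mul_avg μO (continuous_tpO κ 1)]
  refine Eq.trans ?_ (avg_mul_left μO _ ⟨O, hO⟩)
  congr 1
  ext1 P
  simp [← tp_mul, oc_mul]

/-- The range of the orthogonal twirl consists of `O(d)`-invariant tensors. -/
theorem oInv_twirlO (T : (κ × Bool → Fin d) → ℂ) : OInv (twirlO κ μO 1 *ᵥ T) := by
  intro O hO i
  have h : tp κ (oc O) *ᵥ (twirlO κ μO 1 *ᵥ T) = twirlO κ μO 1 *ᵥ T := by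
    rw [Matrix.mulVec_mulVec, tp_mul_twirlO κ μO hO]
  simpa only [Matrix.mulVec, dotProduct, tp_oc_apply] using congrFun h i

theorem twirlU_mul_tp {A : Matrix (Fin d) (Fin d) ℂ} (hA : A ∈ Matrix.unitaryGroup (Fin d) ℂ) :
    twirlU κ μU * tp κ A = twirlU κ μU := by
  rw [twirlU, avg_mul μU (continuous_tpU κ)]
  refine Eq.trans ?_ (avg_mul_right μU _ ⟨A, hA⟩)
  congr 1
  ext1 P
  simp [← tp_mul]

/-- The unitary twirl absorbs the twirl over any conjugate of the orthogonal group. -/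
theorem twirlU_mul_twirlO {W : Matrix (Fin d) (Fin d) ℂ}
    (hW : W ∈ Matrix.unitaryGroup (Fin d) ℂ) :
    twirlU κ μU * twirlO κ μO W = twirlU κ μU := by
  rw [twirlO, mul_avg μO (continuous_tpO κ W)]
  simp only [twirlU_mul_tp κ μU (conj_oc_mem hW _), avg_const]

theorem twirlO_conj (W : Matrix (Fin d) (Fin d) ℂ) :
    twirlO κ μO W = tp κ W * twirlO κ μO 1 * tp κ Wᴴ := by
  have hc := continuous_tpO κ (1 : Matrix (Fin d) (Fin d) ℂ)
  rw [twirlO, twirlO, mul_avg μO hc, avg_mul μO (by fun_prop)]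
  simp [tp_mul]

theorem twirlU_mulVec_pairing {s : Equiv.Perm (κ × Bool)}
    (h : ∀ x, (s (x, false)).2 ≠ (s (x, true)).2) :
    twirlU κ μU *ᵥ pairing s = pairing s := by
  ext p
  rw [twirlU, avg_mulVec μU (continuous_tpU κ)]
  simp [tp_mulVec_pairing_of_ne (SetLike.coe_mem _) h]

end Twirls

/-! ### The twofold twirl of the maximally entangled projection -/

section TwoFold

set_option linter.unusedSectionVars false

variable {d : ℕ}

/-- The tensor of `d • Pt d`: the two row slots are joined, and so are the two column slots. -/
def cup : (Fin 2 × Bool → Fin d) → ℂ := pairing (Equiv.swap (0, true) (1, false))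

/-- The tensor of the identity of `ℂ^d ⊗ ℂ^d`. -/
def idT : (Fin 2 × Bool → Fin d) → ℂ := pairing 1

/-- The tensor of the flip of `ℂ^d ⊗ ℂ^d`. -/
def flipT : (Fin 2 × Bool → Fin d) → ℂ := pairing (Equiv.swap (0, true) (1, true))

theorem tp_mulVec_cup (A : Matrix (Fin d) (Fin d) ℂ) (p : Fin 2 × Bool → Fin d) :
    (tp (Fin 2) A *ᵥ cup) p = (slot A false * (slot A false)ᵀ) (p (0, false)) (p (1, false)) *
      (slot A true * (slot A true)ᵀ) (p (0, true)) (p (1, true)) := by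
  rw [cup, tp_mulVec_pairing, Fin.prod_univ_two]
  rfl

/-- The three Brauer diagrams on four slots. -/
def diagram : Fin 3 → Equiv.Perm (Fin 2 × Bool) :=
  ![1, Equiv.swap (0, true) (1, true), Equiv.swap (0, true) (1, false)]

set_option maxRecDepth 100000 in
/-- Every pairing of four slots has the same pairs as one of the three diagrams; the second clause
says that every pair of the diagram is attained. -/
theorem exists_diagram_match : ∀ s : Equiv.Perm (Fin 2 × Bool), ∃ y : Fin 3,
    (∀ x : Fin 2, ∃ (z : Fin 2) (c : Bool),
      s (x, c) = diagram y (z, false) ∧ s (x, !c) = diagram y (z, true)) ∧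
    (∀ z : Fin 2, ∃ (x : Fin 2) (c : Bool),
      s (x, c) = diagram y (z, false) ∧ s (x, !c) = diagram y (z, true)) := by
  decide

/-- Every pairing of four slots is the tensor of one of the three Brauer diagrams. -/
theorem pairing_two_cases (s : Equiv.Perm (Fin 2 × Bool)) :
    (pairing s : (Fin 2 × Bool → Fin d) → ℂ) = idT ∨
      (pairing s : (Fin 2 × Bool → Fin d) → ℂ) = flipT ∨
      (pairing s : (Fin 2 × Bool → Fin d) → ℂ) = cup := by
  obtain ⟨y, h1, h2⟩ := exists_diagram_match s
  have : (pairing s : (Fin 2 × Bool → Fin d) → ℂ) = pairing (diagram y) := by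
    ext j
    have hiff : (∀ x, j (s (x, false)) = j (s (x, true))) ↔
        ∀ z, j (diagram y (z, false)) = j (diagram y (z, true)) := by
      refine ⟨fun h z => ?_, fun h x => ?_⟩
      · obtain ⟨x, c, hx, hx'⟩ := h2 z
        rw [← hx, ← hx']
        cases c
        · exact h x
        · exact (h x).symm
      · obtain ⟨z, c, hx, hx'⟩ := h1 x
        have := h z
        rw [← hx, ← hx'] at this
        cases c
        · exact this
        · exact this.symm
    by_cases h : ∀ z, j (diagram y (z, false)) = j (diagram y (z, true))
    · rw [pairing_eq_ite, pairing_eq_ite, if_pos h, if_pos (hiff.mpr h)]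
    · rw [pairing_eq_ite, pairing_eq_ite, if_neg h, if_neg (mt hiff.mp h)]
  rw [this]
  fin_cases y
  · exact Or.inl rfl
  · exact Or.inr (Or.inl rfl)
  · exact Or.inr (Or.inr rfl)

theorem OInv.two {T : (Fin 2 × Bool → Fin d) → ℂ} (hT : OInv T) (hd : 2 ≤ d) :
    ∃ a b c : ℂ, T = a • idT + b • flipT + c • cup := by
  obtain ⟨c, rfl⟩ := hT.exists_expansion (by simpa using hd)
  refine Finset.sum_induction _
    (fun T => ∃ a b c : ℂ, T = a • idT + b • flipT + c • cup) ?_ ⟨0, 0, 0, by simp⟩ ?_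
  · rintro _ _ ⟨a, b, c, rfl⟩ ⟨a', b', c', rfl⟩
    exact ⟨a + a', b + b', c + c', by module⟩
  · intro s _
    rcases pairing_two_cases (d := d) s with h | h | h <;> rw [h]
    · exact ⟨c s, 0, 0, by module⟩
    · exact ⟨0, c s, 0, by module⟩
    · exact ⟨0, 0, c s, by module⟩

theorem sum_four (f : Fin d → Fin d → Fin d → Fin d → ℂ) :
    ∑ j : Fin 2 × Bool → Fin d, f (j (0, false)) (j (0, true)) (j (1, false)) (j (1, true)) =
      ∑ a, ∑ b, ∑ c, ∑ e, f a b c e := by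
  let ε : (Fin 2 × Bool → Fin d) ≃ (Fin d × Fin d × Fin d × Fin d) :=
    { toFun := fun j => (j (0, false), j (0, true), j (1, false), j (1, true))
      invFun := fun x k => if k.1 = 0 then (if k.2 then x.2.1 else x.1)
        else (if k.2 then x.2.2.2 else x.2.2.1)
      left_inv := by
        intro j
        ext ⟨x, b⟩
        fin_cases x <;> cases b <;> simp
      right_inv := by
        rintro ⟨a, b, c, e⟩
        simp }
  rw [← ε.symm.sum_comp]
  simp only [Fintype.sum_prod_type]
  rfl

theorem idT_apply (j : Fin 2 × Bool → Fin d) : idT j =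
    (if j (0, false) = j (0, true) then 1 else 0) *
      (if j (1, false) = j (1, true) then 1 else 0) := by
  rw [idT, pairing, Fin.prod_univ_two]
  rfl

theorem flipT_apply (j : Fin 2 × Bool → Fin d) : flipT j =
    (if j (0, false) = j (1, true) then 1 else 0) *
      (if j (1, false) = j (0, true) then 1 else 0) := by
  rw [flipT, pairing, Fin.prod_univ_two]
  rfl

theorem cup_apply (j : Fin 2 × Bool → Fin d) : cup j =
    (if j (0, false) = j (1, false) then 1 else 0) *
      (if j (0, true) = j (1, true) then 1 else 0) := by
  rw [cup, pairing, Fin.prod_univ_two]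
  rfl

theorem idT_dot_idT : (idT : (Fin 2 × Bool → Fin d) → ℂ) ⬝ᵥ idT = d * d := by
  simp only [dotProduct, idT_apply]
  rw [sum_four fun a b c e => ((if a = b then 1 else 0) * (if c = e then 1 else 0) : ℂ) *
    ((if a = b then 1 else 0) * (if c = e then 1 else 0))]
  simp

theorem idT_dot_flipT : (idT : (Fin 2 × Bool → Fin d) → ℂ) ⬝ᵥ flipT = d := by
  simp only [dotProduct, idT_apply, flipT_apply]
  rw [sum_four fun a b c e => ((if a = b then 1 else 0) * (if c = e then 1 else 0) : ℂ) *
    ((if a = e then 1 else 0) * (if c = b then 1 else 0))]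
  simp

theorem idT_dot_cup : (idT : (Fin 2 × Bool → Fin d) → ℂ) ⬝ᵥ cup = d := by
  simp only [dotProduct, idT_apply, cup_apply]
  rw [sum_four fun a b c e => ((if a = b then 1 else 0) * (if c = e then 1 else 0) : ℂ) *
    ((if a = c then 1 else 0) * (if b = e then 1 else 0))]
  simp

theorem flipT_dot_flipT : (flipT : (Fin 2 × Bool → Fin d) → ℂ) ⬝ᵥ flipT = d * d := by
  simp only [dotProduct, flipT_apply]
  rw [sum_four fun a b c e => ((if a = e then 1 else 0) * (if c = b then 1 else 0) : ℂ) *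
    ((if a = e then 1 else 0) * (if c = b then 1 else 0))]
  simp

theorem flipT_dot_cup : (flipT : (Fin 2 × Bool → Fin d) → ℂ) ⬝ᵥ cup = d := by
  simp only [dotProduct, flipT_apply, cup_apply]
  rw [sum_four fun a b c e => ((if a = e then 1 else 0) * (if c = b then 1 else 0) : ℂ) *
    ((if a = c then 1 else 0) * (if b = e then 1 else 0))]
  simp

theorem cup_dot_cup : (cup : (Fin 2 × Bool → Fin d) → ℂ) ⬝ᵥ cup = d * d := by
  simp only [dotProduct, cup_apply]
  rw [sum_four fun a b c e => ((if a = c then 1 else 0) * (if b = e then 1 else 0) : ℂ) *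
    ((if a = c then 1 else 0) * (if b = e then 1 else 0))]
  simp

theorem idT_ne (x : Fin 2) :
    ((1 : Equiv.Perm (Fin 2 × Bool)) (x, false)).2 ≠
      ((1 : Equiv.Perm (Fin 2 × Bool)) (x, true)).2 := by
  revert x; decide

theorem flipT_ne (x : Fin 2) :
    (Equiv.swap ((0, true) : Fin 2 × Bool) (1, true) (x, false)).2 ≠
      (Equiv.swap ((0, true) : Fin 2 × Bool) (1, true) (x, true)).2 := by
  revert x; decide

theorem cup_dot_tp_cup (A : Matrix (Fin d) (Fin d) ℂ) :
    cup ⬝ᵥ (tp (Fin 2) A *ᵥ cup) = (A * Aᵀ).trace * (starRingEnd ℂ) (A * Aᵀ).trace := by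
  simp only [dotProduct, tp_mulVec_cup, cup_apply]
  rw [sum_four fun a b c e => ((if a = c then 1 else 0) * (if b = e then 1 else 0) : ℂ) *
    ((slot A false * (slot A false)ᵀ) a c * (slot A true * (slot A true)ᵀ) b e)]
  have h : (starRingEnd ℂ) (A * Aᵀ).trace = (slot A true * (slot A true)ᵀ).trace := by
    simp [Matrix.trace, Matrix.mul_apply, slot]
  rw [h]
  simp [Matrix.trace, slot, Finset.sum_mul_sum]

/-- The trace in the hypothesis on `W` is `|Tr (W Wᵀ)|² / d²`. -/
theorem trace_Pt (hd : 0 < d) (W : Matrix (Fin d) (Fin d) ℂ) :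
    ((W ⊗ₖ W) * Pt d * (W ⊗ₖ W)ᴴ * Pt d).trace * (d * d : ℂ) =
      (Wᴴ * Wᴴᵀ).trace * (starRingEnd ℂ) (Wᴴ * Wᴴᵀ).trace := by
  have hd0 : (d : ℂ) ≠ 0 := by exact_mod_cast hd.ne'
  let ω : Fin d × Fin d → ℂ := fun p => if p.1 = p.2 then 1 else 0
  have hPt : Pt d = (1 / d : ℂ) • Matrix.vecMulVec ω ω := by
    ext p q
    simp only [Pt, Matrix.smul_apply, Matrix.vecMulVec_apply, ω, smul_eq_mul]
    by_cases h1 : p.1 = p.2 <;> by_cases h2 : q.1 = q.2 <;> simp [h1, h2]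
  have hK : ∀ K : Matrix (Fin d × Fin d) (Fin d × Fin d) ℂ,
      ω ⬝ᵥ (K *ᵥ ω) = ∑ a, ∑ b, K (a, a) (b, b) := by
    intro K
    simp [ω, dotProduct, Matrix.mulVec, Fintype.sum_prod_type]
  rw [hPt]
  simp only [Matrix.mul_smul, Matrix.smul_mul, Matrix.mul_vecMulVec, Matrix.vecMulVec_mul,
    Matrix.trace_smul, Matrix.trace_vecMulVec, Matrix.smul_mulVec, smul_dotProduct,
    Matrix.vecMulVec_mulVec, op_smul_eq_smul, ← Matrix.dotProduct_mulVec, smul_eq_mul]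
  rw [dotProduct_comm _ ω, hK, hK]
  have h1 : (Wᴴ * Wᴴᵀ).trace = ∑ a, ∑ b, (W ⊗ₖ W)ᴴ (a, a) (b, b) := by
    simp [Matrix.trace, Matrix.mul_apply]
  have h2 : (starRingEnd ℂ) (Wᴴ * Wᴴᵀ).trace = ∑ a, ∑ b, (W ⊗ₖ W) (a, a) (b, b) := by
    rw [Finset.sum_comm]
    simp [Matrix.trace, Matrix.mul_apply]
  rw [h2, h1]
  field_simp

/-- The twofold twirl over the conjugated orthogonal group sends the maximally entangled
projection to a combination of the identity and the flip. The three coefficients in the Brauer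
basis are determined by the traces against that basis; the value of `|Tr (W Wᵀ)|²` is exactly the
one for which the coefficient of the projection itself vanishes. -/
theorem twirlO_one_mulVec (hd : 2 ≤ d) {W : Matrix (Fin d) (Fin d) ℂ}
    (hW : W ∈ Matrix.unitaryGroup (Fin d) ℂ)
    (htr : ((W ⊗ₖ W) * Pt d * (W ⊗ₖ W)ᴴ * Pt d).trace = (2 / (d * (d + 1)) : ℂ))
    (μO : Measure (Matrix.orthogonalGroup (Fin d) ℝ)) [μO.IsHaarMeasure] [IsProbabilityMeasure μO] :
    ∃ a b : ℂ, twirlO (Fin 2) μO 1 *ᵥ (tp (Fin 2) Wᴴ *ᵥ cup) = a • idT + b • flipT := by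
  have hW' : Wᴴ ∈ Matrix.unitaryGroup (Fin d) ℂ := Unitary.star_mem hW
  obtain ⟨a, b, c, hZ⟩ := (oInv_twirlO (Fin 2) μO (tp (Fin 2) Wᴴ *ᵥ cup)).two hd
  have hfix : ∀ s : Equiv.Perm (Fin 2 × Bool),
      (pairing s : (Fin 2 × Bool → Fin d) → ℂ) ᵥ* twirlO (Fin 2) μO 1 = pairing s := by
    intro s
    have h : Matrix.of (fun _ : Unit => (pairing s : (Fin 2 × Bool → Fin d) → ℂ)) *
        twirlO (Fin 2) μO 1 = Matrix.of fun _ : Unit => pairing s := by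
      rw [twirlO, mul_avg μO (continuous_tpO (Fin 2) 1)]
      refine Eq.trans (congrArg (avg μO) (funext fun O => ?_)) (avg_const μO _)
      ext u j
      simpa [Matrix.mul_apply, Matrix.vecMul, dotProduct] using
        congrFun (pairing_vecMul_tp_oc O.2 s) j
    exact congrFun h ()
  have e1 := congrArg (idT ⬝ᵥ ·) hZ
  have e2 := congrArg (flipT ⬝ᵥ ·) hZ
  have e3 := congrArg (cup ⬝ᵥ ·) hZ
  simp only [dotProduct_add, dotProduct_smul, idT_dot_idT, idT_dot_flipT, idT_dot_cup,
    smul_eq_mul] at e1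
  simp only [dotProduct_add, dotProduct_smul, flipT_dot_flipT, dotProduct_comm flipT idT,
    idT_dot_flipT, flipT_dot_cup, smul_eq_mul] at e2
  simp only [dotProduct_add, dotProduct_smul, cup_dot_cup, dotProduct_comm cup idT,
    dotProduct_comm cup flipT, idT_dot_cup, flipT_dot_cup, smul_eq_mul] at e3
  rw [idT, Matrix.dotProduct_mulVec, hfix, Matrix.dotProduct_mulVec,
    pairing_vecMul_tp_of_ne hW' idT_ne, ← idT, idT_dot_cup] at e1
  rw [flipT, Matrix.dotProduct_mulVec, hfix, Matrix.dotProduct_mulVec,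
    pairing_vecMul_tp_of_ne hW' flipT_ne, ← flipT, flipT_dot_cup] at e2
  have hd0 : (d : ℂ) ≠ 0 := by exact_mod_cast (by omega : d ≠ 0)
  have hd1 : (d : ℂ) + 1 ≠ 0 := by exact_mod_cast (by omega : d + 1 ≠ 0)
  have hd2 : (d : ℂ) - 1 ≠ 0 := sub_ne_zero.mpr (by exact_mod_cast (by omega : d ≠ 1))
  have hd3 : (d : ℂ) + 2 ≠ 0 := by exact_mod_cast (by omega : d + 2 ≠ 0)
  have hx : cup ⬝ᵥ (tp (Fin 2) Wᴴ *ᵥ cup) = 2 * d / (d + 1) := by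
    rw [cup_dot_tp_cup, ← trace_Pt (by omega), htr]
    field_simp
  rw [cup, Matrix.dotProduct_mulVec, hfix, ← cup, hx] at e3
  have hc : c = 0 := by
    refine (mul_eq_zero.mp (?_ : (d * (d - 1) * (d + 2) : ℂ) * c = 0)).resolve_left
      (mul_ne_zero (mul_ne_zero hd0 hd2) hd3)
    rw [div_eq_iff hd1] at e3
    linear_combination e1 + e2 - e3
  exact ⟨a, b, by rw [hZ, hc]; simp⟩

end TwoFold

/-! ### Reduction of the threefold twirl to the twofold one -/

section ThreeFold

variable {d : ℕ} {W : Matrix (Fin d) (Fin d) ℂ}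
  (μO : Measure (Matrix.orthogonalGroup (Fin d) ℝ))
  [μO.IsHaarMeasure] [IsProbabilityMeasure μO]
  (μU : Measure (Matrix.unitaryGroup (Fin d) ℂ)) [μU.IsHaarMeasure] [IsProbabilityMeasure μU]

/-- On the maximally entangled projection the conjugated orthogonal twirl already lands in the
span of the identity and the flip, which the unitary twirl fixes. Since the unitary twirl absorbs
the orthogonal one, both twirls agree there. -/
theorem twirlO_mulVec_cup (hd : 2 ≤ d) (hW : W ∈ Matrix.unitaryGroup (Fin d) ℂ)
    (htr : ((W ⊗ₖ W) * Pt d * (W ⊗ₖ W)ᴴ * Pt d).trace = (2 / (d * (d + 1)) : ℂ)) :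
    twirlO (Fin 2) μO W *ᵥ cup = twirlU (Fin 2) μU *ᵥ cup := by
  obtain ⟨a, b, h⟩ := twirlO_one_mulVec hd hW htr μO
  have hZ : twirlO (Fin 2) μO W *ᵥ cup = a • idT + b • flipT := by
    rw [twirlO_conj, ← Matrix.mulVec_mulVec, ← Matrix.mulVec_mulVec, h, Matrix.mulVec_add,
      Matrix.mulVec_smul, Matrix.mulVec_smul, idT, flipT, tp_mulVec_pairing_of_ne hW idT_ne,
      tp_mulVec_pairing_of_ne hW flipT_ne]
  rw [← twirlU_mul_twirlO (Fin 2) μO μU hW, ← Matrix.mulVec_mulVec, hZ, Matrix.mulVec_add,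
    Matrix.mulVec_smul, Matrix.mulVec_smul, idT, flipT, twirlU_mulVec_pairing (Fin 2) μU idT_ne,
    twirlU_mulVec_pairing (Fin 2) μU flipT_ne]

set_option maxRecDepth 100000 in
/-- Three pairs containing three row slots and three column slots either are all mixed or consist
of one pair of rows, one pair of columns and one mixed pair. -/
theorem three_pairs_cases : ∀ b : Fin 3 → Bool × Bool,
    (∑ x, ((b x).1.toNat + (b x).2.toNat)) = 3 → (∀ x, (b x).1 ≠ (b x).2) ∨
      ∃ e : Equiv.Perm (Fin 3), b (e 0) = (false, false) ∧ b (e 1) = (true, true) ∧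
        (b (e 2)).1 ≠ (b (e 2)).2 := by
  decide

theorem pairing_three_cases (s : Equiv.Perm (Fin 3 × Bool)) :
    (∀ x, (s (x, false)).2 ≠ (s (x, true)).2) ∨
      ∃ e : Equiv.Perm (Fin 3),
        ((s (e 0, false)).2 = false ∧ (s (e 0, true)).2 = false) ∧
        ((s (e 1, false)).2 = true ∧ (s (e 1, true)).2 = true) ∧
        (s (e 2, false)).2 ≠ (s (e 2, true)).2 := by
  have h := Equiv.sum_comp s fun k => k.2.toNat
  rw [Fintype.sum_prod_type] at h
  have h3 := three_pairs_cases (fun x => ((s (x, false)).2, (s (x, true)).2)) (by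
    simpa [Fintype.sum_prod_type, add_comm] using h)
  simpa only [Prod.mk.injEq] using h3

/-- A diagram with one pair of rows, one pair of columns and one mixed pair is, up to relabelling,
the tensor product of an identity and the maximally entangled projection on two factors. -/
theorem tp_mulVec_pairing_three {s : Equiv.Perm (Fin 3 × Bool)} {e : Equiv.Perm (Fin 3)}
    (h0 : (s (e 0, false)).2 = false ∧ (s (e 0, true)).2 = false)
    (h1 : (s (e 1, false)).2 = true ∧ (s (e 1, true)).2 = true)
    (h2 : (s (e 2, false)).2 ≠ (s (e 2, true)).2) (p : Fin 3 × Bool → Fin d) :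
    ∃ (C : ℂ) (p' : Fin 2 × Bool → Fin d), ∀ A ∈ Matrix.unitaryGroup (Fin d) ℂ,
      (tp (Fin 3) A *ᵥ pairing s) p = C * (tp (Fin 2) A *ᵥ cup) p' := by
  refine ⟨(1 : Matrix (Fin d) (Fin d) ℂ) (p (s (e 2, false))) (p (s (e 2, true))),
    fun k => p (s (e (if k.2 then 1 else 0), if k.1 = 0 then false else true)), fun A hA => ?_⟩
  rw [tp_mulVec_pairing, ← Equiv.prod_comp e, Fin.prod_univ_three, tp_mulVec_cup,
    slot_mul_transpose_of_ne hA h2, h0.1, h0.2, h1.1, h1.2]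
  simp [mul_comm]

/-- The conjugated orthogonal twirl and the unitary twirl agree on every Brauer diagram. -/
theorem twirlO_mulVec_pairing (hd : 2 ≤ d) (hW : W ∈ Matrix.unitaryGroup (Fin d) ℂ)
    (htr : ((W ⊗ₖ W) * Pt d * (W ⊗ₖ W)ᴴ * Pt d).trace = (2 / (d * (d + 1)) : ℂ))
    (s : Equiv.Perm (Fin 3 × Bool)) :
    twirlO (Fin 3) μO W *ᵥ pairing s = twirlU (Fin 3) μU *ᵥ pairing s := by
  rcases pairing_three_cases s with h | ⟨e, h0, h1, h2⟩
  · rw [twirlU_mulVec_pairing (Fin 3) μU h]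
    ext p
    rw [twirlO, avg_mulVec μO (continuous_tpO (Fin 3) W)]
    simp [tp_mulVec_pairing_of_ne (conj_oc_mem hW _) h]
  · ext p
    obtain ⟨C, p', hC⟩ := tp_mulVec_pairing_three h0 h1 h2 p
    have h := congrFun (twirlO_mulVec_cup μO μU hd hW htr) p'
    rw [twirlO, twirlU, avg_mulVec μO (continuous_tpO (Fin 2) W),
      avg_mulVec μU (continuous_tpU (Fin 2))] at h
    rw [twirlO, twirlU, avg_mulVec μO (continuous_tpO (Fin 3) W),
      avg_mulVec μU (continuous_tpU (Fin 3))]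
    simp only [hC _ (conj_oc_mem hW _), hC _ (SetLike.coe_mem _), integral_const_mul, h]

theorem twirlO_twirlO_mulVec (hd : 3 ≤ d) (hW : W ∈ Matrix.unitaryGroup (Fin d) ℂ)
    (htr : ((W ⊗ₖ W) * Pt d * (W ⊗ₖ W)ᴴ * Pt d).trace = (2 / (d * (d + 1)) : ℂ))
    (T : (Fin 3 × Bool → Fin d) → ℂ) :
    twirlO (Fin 3) μO W *ᵥ (twirlO (Fin 3) μO 1 *ᵥ T) = twirlU (Fin 3) μU *ᵥ T := by
  rw [← twirlU_mul_twirlO (Fin 3) μO μU (one_mem _), ← Matrix.mulVec_mulVec]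
  obtain ⟨c, hc⟩ := (oInv_twirlO (Fin 3) μO T).exists_expansion (by simpa using hd)
  rw [hc, Matrix.mulVec_sum, Matrix.mulVec_sum]
  simp only [Matrix.mulVec_smul, twirlO_mulVec_pairing μO μU (by omega) hW htr]

end ThreeFold

/-! ### Vectorisation -/

section Vectorisation

variable {d : ℕ}

/-- The row index (for `false`) or column index (for `true`) encoded by a labelling of the slots. -/
def unslot (j : Fin 3 × Bool → Fin d) (b : Bool) : Fin d × Fin d × Fin d :=
  (j (0, b), j (1, b), j (2, b))

/-- The labelling of the slots encoding a pair of row and column indices. -/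
def slots (p q : Fin d × Fin d × Fin d) : Fin 3 × Bool → Fin d :=
  fun k => ![(bif k.2 then q else p).1, (bif k.2 then q else p).2.1,
    (bif k.2 then q else p).2.2] k.1

/-- Labellings of the slots are pairs consisting of a row index and a column index. -/
def slotsEquiv : (Fin 3 × Bool → Fin d) ≃ (Fin d × Fin d × Fin d) × (Fin d × Fin d × Fin d) where
  toFun j := (unslot j false, unslot j true)
  invFun x := slots x.1 x.2
  left_inv j := by
    ext ⟨x, b⟩
    fin_cases x <;> cases b <;> rfl
  right_inv x := rfl

/-- A matrix on `(ℂ^d)^{⊗3}` as a vector indexed by labellings of its six slots. -/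
def vec3 (M : Matrix (Fin d × Fin d × Fin d) (Fin d × Fin d × Fin d) ℂ) :
    (Fin 3 × Bool → Fin d) → ℂ :=
  fun j => M (unslot j false) (unslot j true)

theorem vec3_slots (M : Matrix (Fin d × Fin d × Fin d) (Fin d × Fin d × Fin d) ℂ)
    (p q : Fin d × Fin d × Fin d) : vec3 M (slots p q) = M p q := rfl

theorem vec3_conj (A : Matrix (Fin d) (Fin d) ℂ)
    (M : Matrix (Fin d × Fin d × Fin d) (Fin d × Fin d × Fin d) ℂ) :
    vec3 (kron3 A * M * (kron3 A)ᴴ) = tp (Fin 3) A *ᵥ vec3 M := by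
  ext j
  simp only [Matrix.mulVec, dotProduct]
  rw [← (slotsEquiv (d := d)).symm.sum_comp, Fintype.sum_prod_type, Finset.sum_comm]
  simp only [vec3, Matrix.mul_apply, Finset.sum_mul]
  refine Finset.sum_congr rfl fun y _ => Finset.sum_congr rfl fun x _ => ?_
  have h : tp (Fin 3) A j (slotsEquiv.symm (x, y)) =
      kron3 A (unslot j false) x * (kron3 A)ᴴ y (unslot j true) := by
    simp only [tp, Matrix.of_apply, Fintype.prod_prod_type, Fin.prod_univ_three,
      Fintype.prod_bool]
    simp [slot, kron3, unslot, slotsEquiv, slots]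
    ring
  rw [h]
  change _ = _ * M x y
  ring

end Vectorisation

/-- For `d ≥ 5`, if `W` is unitary with `Tr((W⊗W) P_t (W⊗W)† P_t) = 2/(d(d+1))`,
then the unitary 3-fold twirl decomposes into the orthogonal 3-fold twirl
followed by the `W`-conjugated orthogonal 3-fold twirl. -/
theorem unitary_three_twirl_eq_double_orthogonal_twirl (d : ℕ) (hd : 5 ≤ d)
    (W : Matrix (Fin d) (Fin d) ℂ) (hW : W ∈ Matrix.unitaryGroup (Fin d) ℂ)
    (htr : ((W ⊗ₖ W) * Pt d * (W ⊗ₖ W)ᴴ * Pt d).trace = (2 / (d * (d + 1)) : ℂ))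
    (μO : Measure (Matrix.orthogonalGroup (Fin d) ℝ))
    [μO.IsHaarMeasure] [IsProbabilityMeasure μO]
    (μU : Measure (Matrix.unitaryGroup (Fin d) ℂ))
    [μU.IsHaarMeasure] [IsProbabilityMeasure μU]
    (M : Matrix (Fin d × Fin d × Fin d) (Fin d × Fin d × Fin d) ℂ)
    (p q : Fin d × Fin d × Fin d) :
    (∫ O' : Matrix.orthogonalGroup (Fin d) ℝ,
      ∫ O : Matrix.orthogonalGroup (Fin d) ℝ,
        ((kron3 (W * oc (O' : Matrix (Fin d) (Fin d) ℝ) * Wᴴ)) *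
          ((kron3 (oc (O : Matrix (Fin d) (Fin d) ℝ))) * M *
            (kron3 (oc (O : Matrix (Fin d) (Fin d) ℝ)))ᴴ) *
          (kron3 (W * oc (O' : Matrix (Fin d) (Fin d) ℝ) * Wᴴ))ᴴ) p q ∂μO ∂μO)
    = ∫ U : Matrix.unitaryGroup (Fin d) ℂ,
        ((kron3 (U : Matrix (Fin d) (Fin d) ℂ)) * M *
          (kron3 (U : Matrix (Fin d) (Fin d) ℂ))ᴴ) p q ∂μU := by
  have hO := continuous_tpO (Fin 3) (1 : Matrix (Fin d) (Fin d) ℂ)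
  have h1 : twirlO (Fin 3) μO 1 =
      avg μO fun O => tp (Fin 3) (oc (O : Matrix (Fin d) (Fin d) ℝ)) := by
    simp [twirlO]
  have h := congrFun (twirlO_twirlO_mulVec μO μU (by omega) hW htr (vec3 M)) (slots p q)
  rw [h1, twirlO, twirlU, avg_mulVec μO (continuous_tpO (Fin 3) W),
    avg_mulVec μU (continuous_tpU (Fin 3))] at h
  simp only [Matrix.one_mul, Matrix.conjTranspose_one, Matrix.mul_one] at hO
  simp only [← integral_mulVec μO hO, ← vec3_conj, vec3_slots] at h
  exact h
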